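/- Let (X,ρ) and (X',ρ') be separable metric spaces, μ a blanketed Borel probability measure on X, ν a blanketed Borel probability measure on X', ξ ∈ Φ_D a blanketed premeasure on X, ξ' ∈ Φ_D a blanketed premeasure on X', and q ∈ ℝ. Let E ⊆ supp μ and E' ⊆ supp ν be Borel sets with H^{q,ξ}_μ(E) < ∞ and H^{q,ξ'}_ν(E') < ∞. Then H^{q,ξ}_μ(E) · H^{q,ξ'}_ν(E') ≤ H^{q,ξ₀}_{μ×ν}(E×E'), where the product X×X' carries the metric max(ρ,ρ') and ξ₀(B×B') = ξ(B)·ξ'(B'). -/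

import Mathlib

open Metric MeasureTheory Set Filter TopologicalSpace
open scoped ENNReal NNReal Classical

noncomputable section

/-- `x ^ q` for extended nonnegative reals, with the paper's convention
`0 ^ q = ∞` for `q ≤ 0`. -/
def epow (x : ℝ≥0∞) (q : ℝ) : ℝ≥0∞ := if x = 0 ∧ q ≤ 0 then ∞ else x ^ q

variable {X X' : Type*}

section Defs

variable [MetricSpace X] [MetricSpace X']

/-- A premeasure on a metric space: an increasing `[0,∞]`-valued function on the family of
closed balls, vanishing on the empty set. -/
def IsPremeasure (ξ : Set X → ℝ≥0∞) : Prop :=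
  ξ ∅ = 0 ∧ ∀ (x : X) (r : ℝ) (x' : X) (r' : ℝ),
    closedBall x r ⊆ closedBall x' r' → ξ (closedBall x r) ≤ ξ (closedBall x' r')

/-- The doubling ("blanketed") condition defining the class `Φ_D` of premeasures:
`ξ(B(x,2r)) ≤ K ξ(B(x,r))` for some constant `K > 1`, all `x` and all `0 < r ≤ 1`. -/
def PremeasureBlanketed (ξ : Set X → ℝ≥0∞) : Prop :=
  ∃ K : ℝ≥0, 1 < K ∧ ∀ (x : X) (r : ℝ), 0 < r → r ≤ 1 →
    ξ (closedBall x (2 * r)) ≤ (K : ℝ≥0∞) * ξ (closedBall x r)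

variable [MeasurableSpace X] [MeasurableSpace X']

/-- The support of a Borel measure on a metric space. -/
def measSupport (μ : Measure X) : Set X := {x : X | ∀ r : ℝ, 0 < r → 0 < μ (ball x r)}

/-- A blanketed (doubling) measure: for some `a > 1`,
`limsup_{r → 0⁺} sup_{x ∈ supp μ} μ(B(x,ar)) / μ(B(x,r)) < ∞`. -/
def MeasureBlanketed (μ : Measure X) : Prop :=
  ∃ a : ℝ, 1 < a ∧
    limsup (fun r : ℝ => ⨆ x ∈ measSupport μ,
      μ (closedBall x (a * r)) / μ (closedBall x r)) (nhdsWithin 0 (Ioi 0)) < ∞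

/-- The quantity `μ(B)^q ξ(B)` attached to a ball `B`. -/
def ballWeight (μ : Measure X) (q : ℝ) (ξ : Set X → ℝ≥0∞) (B : Set X) : ℝ≥0∞ :=
  epow (μ B) q * ξ B

/-- A centered `δ`-cover of `E`: countably many closed balls centered in `E`, of diameters
at most `2δ`, covering `E`. -/
def IsCenteredCover (E : Set X) (δ : ℝ) (c : ℕ → X) (r : ℕ → ℝ) : Prop :=
  (∀ i, c i ∈ E) ∧ (∀ i, diam (closedBall (c i) (r i)) ≤ 2 * δ) ∧
    E ⊆ ⋃ i, closedBall (c i) (r i)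

/-- The pre-Hausdorff quantity `H^{q,ξ}_{μ,δ}(E)`. -/
def Hd (μ : Measure X) (q : ℝ) (ξ : Set X → ℝ≥0∞) (δ : ℝ) (E : Set X) : ℝ≥0∞ :=
  if E = ∅ then 0 else
    ⨅ (c : ℕ → X) (r : ℕ → ℝ) (_ : IsCenteredCover E δ c r),
      ∑' i, ballWeight μ q ξ (closedBall (c i) (r i))

/-- `H^{q,ξ}_{μ,0}(E) = sup_{δ > 0} H^{q,ξ}_{μ,δ}(E)`. -/
def H0 (μ : Measure X) (q : ℝ) (ξ : Set X → ℝ≥0∞) (E : Set X) : ℝ≥0∞ :=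
  ⨆ (δ : ℝ) (_ : 0 < δ), Hd μ q ξ δ E

/-- The generalized Hausdorff measure `H^{q,ξ}_μ(E) = sup_{F ⊆ E} H^{q,ξ}_{μ,0}(F)`. -/
def HM (μ : Measure X) (q : ℝ) (ξ : Set X → ℝ≥0∞) (E : Set X) : ℝ≥0∞ :=
  ⨆ (F : Set X) (_ : F ⊆ E), H0 μ q ξ F

/-- A weighted and centered `δ`-cover of `E`: countably many pairs `(w i, B i)` of nonnegative
weights and closed balls centered in `E` of diameters at most `2δ`, with
`Σ {w i : x ∈ B i} ≥ 1` for every `x ∈ E`. -/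
def IsWeightedCover (E : Set X) (δ : ℝ) (w : ℕ → ℝ≥0) (c : ℕ → X) (r : ℕ → ℝ) : Prop :=
  (∀ i, c i ∈ E) ∧ (∀ i, diam (closedBall (c i) (r i)) ≤ 2 * δ) ∧
    ∀ x ∈ E, 1 ≤ ∑' i, (if x ∈ closedBall (c i) (r i) then (w i : ℝ≥0∞) else 0)

/-- The pre-weighted-Hausdorff quantity `W^{q,ξ}_{μ,δ}(E)`. -/
def Wd (μ : Measure X) (q : ℝ) (ξ : Set X → ℝ≥0∞) (δ : ℝ) (E : Set X) : ℝ≥0∞ :=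
  if E = ∅ then 0 else
    ⨅ (w : ℕ → ℝ≥0) (c : ℕ → X) (r : ℕ → ℝ) (_ : IsWeightedCover E δ w c r),
      ∑' i, (w i : ℝ≥0∞) * ballWeight μ q ξ (closedBall (c i) (r i))

/-- `W^{q,ξ}_{μ,0}(E) = sup_{δ > 0} W^{q,ξ}_{μ,δ}(E)`. -/
def W0 (μ : Measure X) (q : ℝ) (ξ : Set X → ℝ≥0∞) (E : Set X) : ℝ≥0∞ :=
  ⨆ (δ : ℝ) (_ : 0 < δ), Wd μ q ξ δ E

/-- The weighted generalized Hausdorff measure `W^{q,ξ}_μ(E) = sup_{F ⊆ E} W^{q,ξ}_{μ,0}(F)`. -/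
def WM (μ : Measure X) (q : ℝ) (ξ : Set X → ℝ≥0∞) (E : Set X) : ℝ≥0∞ :=
  ⨆ (F : Set X) (_ : F ⊆ E), W0 μ q ξ F

/-- Hypothesis (H) for `(X, ξ, μ)`: for every `ε > 0`, `X` can be covered by countably many
closed balls of diameters `< ε` on which `μ(B)^q ξ(B)` is finite. -/
def HypH (μ : Measure X) (q : ℝ) (ξ : Set X → ℝ≥0∞) : Prop :=
  ∀ ε : ℝ, 0 < ε → ∃ (c : ℕ → X) (r : ℕ → ℝ),
    (univ : Set X) ⊆ (⋃ i, closedBall (c i) (r i)) ∧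
    (∀ i, diam (closedBall (c i) (r i)) < ε) ∧
    ∀ i, ballWeight μ q ξ (closedBall (c i) (r i)) < ∞

/-- The product premeasure `ξ₀(B × B') = ξ(B) ξ'(B')` on the product space (whose closed balls
are exactly the products `B(x,r) × B(x',r)`), with the convention `0 ⬝ ∞ = ∞ ⬝ 0 = 0`. -/
def prodPre (ξ : Set X → ℝ≥0∞) (ξ' : Set X' → ℝ≥0∞) : Set (X × X') → ℝ≥0∞ :=
  fun S => ξ (Prod.fst '' S) * ξ' (Prod.snd '' S)

/-- Two sets are (positively) separated: `inf {ρ(x,y) : x ∈ E, y ∈ F} > 0`. -/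
def SepSets (E F : Set X) : Prop := 0 < ⨅ x ∈ E, ⨅ y ∈ F, edist x y

/-- The upper `(q,ξ)`-density of `ν` at `x` with respect to `μ`:
`limsup_{r → 0⁺} ν(B(x,r)) / (μ(B(x,r))^q ξ(B(x,r)))`. -/
def upperDensity (μ : Measure X) (q : ℝ) (ξ : Set X → ℝ≥0∞) (x : X) (ν : Measure X) : ℝ≥0∞ :=
  limsup (fun r : ℝ => ν (closedBall x r) / ballWeight μ q ξ (closedBall x r))
    (nhdsWithin 0 (Ioi 0))

/-- A Hausdorff function: right continuous, monotone increasing `h : [0,∞] → [0,∞]` with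
`h(0) = 0` and `h(r) > 0` for `r > 0`. -/
def IsHausdorffFunction (h : ℝ≥0∞ → ℝ≥0∞) : Prop :=
  Monotone h ∧ h 0 = 0 ∧ (∀ r : ℝ≥0∞, 0 < r → 0 < h r) ∧
    ∀ r : ℝ≥0∞, ContinuousWithinAt h (Ici r) r

/-- The premeasure `ξ_h` induced by a Hausdorff function: `ξ_h(B) = h(diam B)` for `B ≠ ∅`,
`ξ_h(∅) = 0`. -/
def hausPre (h : ℝ≥0∞ → ℝ≥0∞) : Set X → ℝ≥0∞ :=
  fun B => if B = ∅ then 0 else h (EMetric.diam B)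

end Defs

section Thms

variable [MetricSpace X] [SeparableSpace X] [MeasurableSpace X] [BorelSpace X]
variable [MetricSpace X'] [SeparableSpace X'] [MeasurableSpace X'] [BorelSpace X']

section ExtendedPower

/-
For `a < 1` restrict the Borel measure `H^{q,ξ}_μ` to `E` and scale it by `a`, obtaining `lam`. If
`lam(B(x,r)) > μ(B(x,r))^q ξ(B(x,r))` at arbitrarily small scales for every `x` in a Borel set
`N ⊆ E`, then the Vitali covering theorem, available because `μ^q ξ` is blanketed, gives
`H(N) ≤ lam(N) = a H(N)`, so `N` is null. Hence `E` is, up to a null set, the increasing union of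
the sets `D_ρ` of points at which `lam(B(x,r)) ≤ μ(B(x,r))^q ξ(B(x,r))` for all `r < ρ`. A fine
centered cover of `D_ρ × E'` induces on each slice `{x} × E'` a centered cover of `E'`, whose weight
is at least `H^{q,ξ'}_ν(E')` in the limit; integrating over `D_ρ` against `lam` bounds
`lam(D_ρ) H^{q,ξ'}_ν(E')` by the weight of the cover of the product. Let `ρ → 0` and `a → 1`.
-/

variable {x y : ℝ≥0∞} {q : ℝ}

theorem epow_of_pos (x : ℝ≥0∞) (hq : 0 < q) : epow x q = x ^ q :=
  if_neg fun h => hq.not_ge h.2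

theorem epow_of_ne_zero (hx : x ≠ 0) (q : ℝ) : epow x q = x ^ q :=
  if_neg fun h => hx h.1

theorem epow_zero_of_nonpos (hq : q ≤ 0) : epow 0 q = ∞ :=
  if_pos ⟨rfl, hq⟩

theorem epow_le_epow_of_nonpos (hq : q ≤ 0) (hxy : x ≤ y) : epow y q ≤ epow x q := by
  rcases eq_or_ne x 0 with rfl | hx
  · simp only [epow_zero_of_nonpos hq, le_top]
  rw [epow_of_ne_zero hx, epow_of_ne_zero (ne_bot_of_le_ne_bot hx hxy), ← neg_neg q,
    ENNReal.rpow_neg x, ENNReal.rpow_neg y, ENNReal.inv_le_inv]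
  exact ENNReal.rpow_le_rpow hxy (neg_nonneg.2 hq)

theorem epow_mul_epow_le (x y : ℝ≥0∞) (q : ℝ) : epow x q * epow y q ≤ epow (x * y) q := by
  rcases lt_or_ge 0 q with hq | hq
  · simp only [epow_of_pos _ hq, ENNReal.mul_rpow_of_nonneg _ _ hq.le, le_refl]
  rcases eq_or_ne (x * y) 0 with hxy | hxy
  · simp only [hxy, epow_zero_of_nonpos hq, le_top]
  have hx : x ≠ 0 := left_ne_zero_of_mul hxy
  have hy : y ≠ 0 := right_ne_zero_of_mul hxy
  rw [epow_of_ne_zero hx, epow_of_ne_zero hy, epow_of_ne_zero hxy,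
    ENNReal.mul_rpow_of_ne_zero hx hy]

end ExtendedPower

theorem le_tsum_of_forall_finset {ι : Type*} {f g : ι → ℝ≥0∞} {M : ℝ≥0} {C : ℝ≥0∞}
    (hf : ∑' i, f i ≠ ∞) (hfg : ∀ i, g i ≤ M * f i)
    (hC : ∀ S : Finset ι, C ≤ ∑' i, if i ∈ S then f i else g i) : C ≤ ∑' i, f i := by
  have hbound : ∀ S : Finset ι, C ≤ ∑' i, f i + M * ∑' i : {i // i ∉ S}, f i := by
    intro S
    have htail : ∑' i : {i // i ∉ S}, f i = ∑' i, {i | i ∉ S}.indicator f i :=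
      tsum_subtype {i | i ∉ S} f
    rw [htail, ← ENNReal.tsum_mul_left, ← ENNReal.tsum_add]
    refine (hC S).trans (ENNReal.tsum_le_tsum fun i => ?_)
    split_ifs with hi
    · exact le_self_add
    · rw [indicator_of_mem (show i ∈ {i | i ∉ S} from hi)]
      exact (hfg i).trans le_add_self
  have hlim : Tendsto (fun S : Finset ι => ∑' i, f i + M * ∑' i : {i // i ∉ S}, f i) atTop
      (nhds (∑' i, f i + M * 0)) :=
    tendsto_const_nhds.add (ENNReal.Tendsto.const_mul
      (ENNReal.tendsto_tsum_compl_atTop_zero hf) (Or.inr ENNReal.coe_ne_top))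
  simpa only [mul_zero, add_zero] using ge_of_tendsto' hlim hbound

theorem measure_mul_le_tsum_mul_measure {α ι : Type*} [MeasurableSpace α] [Countable ι]
    (lam : Measure α) {B : ι → Set α} (hB : ∀ i, MeasurableSet (B i)) {g : ι → ℝ≥0∞}
    {s : Set α} {C : ℝ≥0∞} (hC : ∀ x ∈ s, C ≤ ∑' i, (B i).indicator (fun _ => g i) x) :
    lam s * C ≤ ∑' i, g i * lam (B i) := by
  have hmeas : ∀ i, Measurable ((B i).indicator fun _ => g i) := fun i =>
    measurable_const.indicator (hB i)
  calc lam s * C = ∫⁻ _ in s, C ∂lam := by rw [setLIntegral_const, mul_comm]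
    _ ≤ ∫⁻ x in s, ∑' i, (B i).indicator (fun _ => g i) x ∂lam :=
        setLIntegral_mono (Measurable.tsum hmeas) hC
    _ ≤ ∫⁻ x, ∑' i, (B i).indicator (fun _ => g i) x ∂lam := setLIntegral_le_lintegral _ _
    _ = ∑' i, g i * lam (B i) := by
        rw [lintegral_tsum fun i => (hmeas i).aemeasurable]
        exact tsum_congr fun i => lintegral_indicator_const (hB i) _

section ClosedBall

variable {α β : Type*} [PseudoMetricSpace α] [PseudoMetricSpace β]

theorem dist_center_le_diam_closedBall {x y : α} {r : ℝ} (hy : y ∈ closedBall x r) :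
    dist y x ≤ diam (closedBall x r) :=
  dist_le_diam_of_mem isBounded_closedBall hy (mem_closedBall_self (nonempty_closedBall.1 ⟨y, hy⟩))

theorem closedBall_min_diam (x : α) (r : ℝ) :
    closedBall x (min r (diam (closedBall x r))) = closedBall x r :=
  (closedBall_subset_closedBall (min_le_left _ _)).antisymm fun _ hy =>
    mem_closedBall.2 (le_min hy (dist_center_le_diam_closedBall hy))

theorem fst_image_closedBall (p : α × β) (r : ℝ) :
    Prod.fst '' closedBall p r = closedBall p.1 r := by
  rcases lt_or_ge r 0 with hr | hr
  · rw [closedBall_eq_empty.2 hr, closedBall_eq_empty.2 hr, image_empty]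
  · rw [← closedBall_prod_same, fst_image_prod _ (nonempty_closedBall.2 hr)]

theorem snd_image_closedBall (p : α × β) (r : ℝ) :
    Prod.snd '' closedBall p r = closedBall p.2 r := by
  rcases lt_or_ge r 0 with hr | hr
  · rw [closedBall_eq_empty.2 hr, closedBall_eq_empty.2 hr, image_empty]
  · rw [← closedBall_prod_same, snd_image_prod (nonempty_closedBall.2 hr)]

theorem diam_closedBall_fst_le (p : α × β) (r : ℝ) :
    diam (closedBall p.1 r) ≤ diam (closedBall p r) := by
  simpa only [fst_image_closedBall, NNReal.coe_one, one_mul] using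
    LipschitzWith.prod_fst.diam_image_le (closedBall p r) isBounded_closedBall

theorem diam_closedBall_snd_le (p : α × β) (r : ℝ) :
    diam (closedBall p.2 r) ≤ diam (closedBall p r) := by
  simpa only [snd_image_closedBall, NNReal.coe_one, one_mul] using
    LipschitzWith.prod_snd.diam_image_le (closedBall p r) isBounded_closedBall

theorem exists_pos_forall_lt_dist_of_areSeparated {s t : Set α} (h : AreSeparated s t) :
    ∃ d : ℝ, 0 < d ∧ ∀ x ∈ s, ∀ y ∈ t, d < dist x y := by
  obtain ⟨ρ, hρ, hst⟩ := h
  obtain ⟨d, -, hd, hdρ⟩ := ENNReal.lt_iff_exists_real_btwn.1 (pos_iff_ne_zero.2 hρ)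
  refine ⟨d, ENNReal.ofReal_pos.1 hd, fun x hx y hy => ?_⟩
  have hlt := hdρ.trans_le (hst x hx y hy)
  rw [edist_dist] at hlt
  exact (ENNReal.ofReal_lt_ofReal_iff'.1 hlt).1

theorem countable_of_pairwiseDisjoint_closedBall {F : Set α} (hF : IsSeparable F)
    {u : Set (α × ℝ)} (hu : ∀ p ∈ u, p.1 ∈ F ∧ 0 < p.2)
    (hdisj : u.PairwiseDisjoint fun p => closedBall p.1 p.2) : u.Countable := by
  have : SeparableSpace F := hF.separableSpace
  refine PairwiseDisjoint.countable_of_isOpen (s := fun p => ((↑) : F → α) ⁻¹' ball p.1 p.2)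
    (fun p hp p' hp' hne => ?_) (fun p _ => isOpen_ball.preimage continuous_subtype_val)
    fun p hp => ⟨⟨p.1, (hu p hp).1⟩, mem_ball_self (hu p hp).2⟩
  exact ((hdisj hp hp' hne).mono ball_subset_closedBall ball_subset_closedBall).preimage _

theorem exists_disjoint_closedBall_covering_of_frequently {F U : Set α} (hF : IsSeparable F)
    (hU : IsOpen U) (hFU : F ⊆ U) {P : α → ℝ → Prop}
    (hP : ∀ x ∈ F, ∃ᶠ r in nhdsWithin (0 : ℝ) (Ioi 0), P x r) {R : ℝ} (hR : 0 < R) :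
    ∃ u : Set (α × ℝ), u.Countable ∧ (u.PairwiseDisjoint fun p => closedBall p.1 p.2) ∧
      (∀ p ∈ u, p.1 ∈ F ∧ p.2 ∈ Ioo 0 R ∧ closedBall p.1 p.2 ⊆ U ∧ P p.1 p.2) ∧
      ∀ S : Finset u, F ⊆ ⋃ p : u, closedBall p.1.1 (if p ∈ S then p.1.2 else 4 * p.1.2) := by
  have hsmall : ∀ x ∈ F, ∀ V ∈ nhds x, ∃ r ∈ Ioo 0 R, closedBall x r ⊆ V ∧ P x r := by
    intro x hx V hV
    have hev : ∀ᶠ r in nhdsWithin (0 : ℝ) (Ioi 0), r ∈ Ioo 0 R ∧ closedBall x r ⊆ V :=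
      inter_mem (Ioo_mem_nhdsGT hR) (nhdsWithin_le_nhds (eventually_closedBall_subset hV))
    obtain ⟨r, hPr, hr, hrV⟩ := ((hP x hx).and_eventually hev).exists
    exact ⟨r, hr, hrV, hPr⟩
  obtain ⟨u, hu, hdisj, hmeet⟩ := Vitali.exists_disjoint_subfamily_covering_enlargement
    (fun p : α × ℝ => closedBall p.1 p.2)
    {p | p.1 ∈ F ∧ p.2 ∈ Ioo 0 R ∧ closedBall p.1 p.2 ⊆ U ∧ P p.1 p.2} Prod.snd 2 one_lt_two
    (fun p hp => hp.2.1.1.le) R (fun p hp => hp.2.1.2.le)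
    fun p hp => nonempty_closedBall.2 hp.2.1.1.le
  refine ⟨u, countable_of_pairwiseDisjoint_closedBall hF
    (fun p hp => ⟨(hu hp).1, (hu hp).2.1.1⟩) hdisj, hdisj, hu, fun S x hx => ?_⟩
  by_cases hxS : x ∈ ⋃ p ∈ S, closedBall p.1.1 p.1.2
  · obtain ⟨p, hp, hxp⟩ := mem_iUnion₂.1 hxS
    exact mem_iUnion.2 ⟨p, by rwa [if_pos hp]⟩
  have hclosed : IsClosed (⋃ p ∈ S, closedBall p.1.1 p.1.2) :=
    S.finite_toSet.isClosed_biUnion fun _ _ => isClosed_closedBall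
  -- A ball around `x` missing the balls of `S` can only meet a selected ball outside `S`.
  obtain ⟨r, hr, hsub, hPr⟩ := hsmall x hx _
    ((hU.inter hclosed.isOpen_compl).mem_nhds ⟨hFU hx, hxS⟩)
  obtain ⟨p, hpu, ⟨z, hzx, hzp⟩, hrp : r ≤ 2 * p.2⟩ :=
    hmeet (x, r) ⟨hx, hr, hsub.trans inter_subset_left, hPr⟩
  have hpS : (⟨p, hpu⟩ : u) ∉ S := fun h => (hsub hzx).2 (mem_iUnion₂.2 ⟨_, h, hzp⟩)
  refine mem_iUnion.2 ⟨⟨p, hpu⟩, ?_⟩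
  rw [if_neg hpS, mem_closedBall]
  have hp : 0 < p.2 := (hu hpu).2.1.1
  calc dist x p.1 ≤ dist z x + dist z p.1 := dist_triangle_left _ _ _
    _ ≤ r + p.2 := add_le_add hzx hzp
    _ ≤ 4 * p.2 := by linarith

end ClosedBall

section Blanketed

variable {α : Type*} [PseudoMetricSpace α]

/-- The doubling condition at small scales for a set function `φ`, centers in `S` and enlargement
factor `a`: it is the form of blanketedness shared by measures, premeasures and the weights
`μ(B)^q ξ(B)`. It avoids quotients, hence any convention for `0 / 0`. -/
def IsBlanketedOn (φ : Set α → ℝ≥0∞) (S : Set α) (a : ℝ) : Prop :=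
  ∃ M : ℝ≥0, ∀ᶠ r in nhdsWithin (0 : ℝ) (Ioi 0), ∀ x ∈ S,
    φ (closedBall x (a * r)) ≤ M * φ (closedBall x r)

namespace IsBlanketedOn

variable {φ ψ : Set α → ℝ≥0∞} {S T : Set α} {a b : ℝ}

theorem mono (h : IsBlanketedOn φ T a) (hST : S ⊆ T) : IsBlanketedOn φ S a := by
  obtain ⟨M, hM⟩ := h
  exact ⟨M, hM.mono fun r hr x hx => hr x (hST hx)⟩

theorem comp (hb : 0 < b) (h : IsBlanketedOn φ S a) (h' : IsBlanketedOn φ S b) :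
    IsBlanketedOn φ S (a * b) := by
  obtain ⟨M, hM⟩ := h
  obtain ⟨N, hN⟩ := h'
  have hscale : Tendsto (b * ·) (nhdsWithin (0 : ℝ) (Ioi 0)) (nhdsWithin 0 (Ioi 0)) :=
    tendsto_nhdsWithin_iff.2 ⟨((continuous_const_mul b).tendsto' 0 0 (mul_zero b)).mono_left
      nhdsWithin_le_nhds, eventually_mem_nhdsWithin.mono fun r hr => mul_pos hb hr⟩
  refine ⟨M * N, ?_⟩
  filter_upwards [hscale.eventually hM, hN] with r hMr hNr x hx
  calc φ (closedBall x (a * b * r)) = φ (closedBall x (a * (b * r))) := by rw [mul_assoc]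
    _ ≤ M * φ (closedBall x (b * r)) := hMr x hx
    _ ≤ M * (N * φ (closedBall x r)) := by gcongr; exact hNr x hx
    _ = (M * N : ℝ≥0) * φ (closedBall x r) := by rw [ENNReal.coe_mul, mul_assoc]

theorem pow (ha : 0 < a) (h : IsBlanketedOn φ S a) (n : ℕ) : IsBlanketedOn φ S (a ^ n) := by
  induction n with
  | zero => exact ⟨1, by simp⟩
  | succ n ih => exact ih.comp ha h

theorem of_le (hφ : Monotone φ) (hab : a ≤ b) (h : IsBlanketedOn φ S b) :
    IsBlanketedOn φ S a := by
  obtain ⟨M, hM⟩ := h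
  refine ⟨M, ?_⟩
  filter_upwards [hM, self_mem_nhdsWithin] with r hr (hr0 : 0 < r) x hx
  exact (hφ (closedBall_subset_closedBall (by gcongr))).trans (hr x hx)

theorem mul (h : IsBlanketedOn φ S a) (h' : IsBlanketedOn ψ S a) :
    IsBlanketedOn (fun B => φ B * ψ B) S a := by
  obtain ⟨M, hM⟩ := h
  obtain ⟨N, hN⟩ := h'
  refine ⟨M * N, ?_⟩
  filter_upwards [hM, hN] with r hMr hNr x hx
  rw [ENNReal.coe_mul, mul_mul_mul_comm]
  exact mul_le_mul' (hMr x hx) (hNr x hx)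

theorem epow (hφ : Monotone φ) (ha : 1 ≤ a) (h : IsBlanketedOn φ S a) (q : ℝ) :
    IsBlanketedOn (fun B => epow (φ B) q) S a := by
  rcases lt_or_ge 0 q with hq | hq
  · obtain ⟨M, hM⟩ := h
    refine ⟨M ^ q, hM.mono fun r hr x hx => ?_⟩
    simp only [epow_of_pos _ hq, ENNReal.coe_rpow_of_nonneg M hq.le,
      ← ENNReal.mul_rpow_of_nonneg _ _ hq.le]
    exact ENNReal.rpow_le_rpow (hr x hx) hq.le
  · refine ⟨1, eventually_mem_nhdsWithin.mono fun r (hr : 0 < r) x _ => ?_⟩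
    rw [ENNReal.coe_one, one_mul]
    exact epow_le_epow_of_nonpos hq
      (hφ (closedBall_subset_closedBall (le_mul_of_one_le_left hr.le ha)))

end IsBlanketedOn

end Blanketed

section BlanketedWeight

variable {α : Type*} [MetricSpace α] {ξ : Set α → ℝ≥0∞}

theorem PremeasureBlanketed.isBlanketedOn (hξ : PremeasureBlanketed ξ) (S : Set α) :
    IsBlanketedOn ξ S 2 := by
  obtain ⟨K, -, hK⟩ := hξ
  exact ⟨K, mem_of_superset (Ioc_mem_nhdsGT one_pos) fun r hr x _ => hK x r hr.1 hr.2⟩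

variable [MeasurableSpace α] {μ : Measure α}

theorem measure_closedBall_ne_zero_of_mem_measSupport {x : α} (hx : x ∈ measSupport μ) {r : ℝ}
    (hr : 0 < r) : μ (closedBall x r) ≠ 0 :=
  ((hx r hr).trans_le (measure_mono ball_subset_closedBall)).ne'

theorem MeasureBlanketed.isBlanketedOn (hμ : MeasureBlanketed μ) (b : ℝ) :
    IsBlanketedOn μ (measSupport μ) b := by
  obtain ⟨a, ha, hlimsup⟩ := hμ
  obtain ⟨M, hM, -⟩ := ENNReal.lt_iff_exists_nnreal_btwn.1 hlimsup
  have hM0 : (M : ℝ≥0∞) ≠ 0 := (zero_le.trans_lt hM).ne'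
  have ha' : IsBlanketedOn μ (measSupport μ) a := by
    refine ⟨M, ?_⟩
    filter_upwards [eventually_lt_of_limsup_lt hM, self_mem_nhdsWithin] with r hr hr0 x hx
    rw [← ENNReal.div_le_iff_le_mul
      (Or.inl (measure_closedBall_ne_zero_of_mem_measSupport hx hr0)) (Or.inr hM0)]
    exact (le_iSup₂ (f := fun x (_ : x ∈ measSupport μ) =>
      μ (closedBall x (a * r)) / μ (closedBall x r)) x hx).trans hr.le
  obtain ⟨n, hn⟩ := pow_unbounded_of_one_lt b ha
  exact (ha'.pow (one_pos.trans ha) n).of_le (fun _ _ h => measure_mono h) hn.le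

theorem isBlanketedOn_ballWeight (hμ : MeasureBlanketed μ) (hξ : PremeasureBlanketed ξ) (q : ℝ)
    (n : ℕ) : IsBlanketedOn (ballWeight μ q ξ) (measSupport μ) (2 ^ n) :=
  ((hμ.isBlanketedOn _).epow (fun _ _ h => measure_mono h) (one_le_pow₀ one_le_two) q).mul
    ((hξ.isBlanketedOn _).pow two_pos n)

end BlanketedWeight

section Hausdorff

variable {α : Type*} [MetricSpace α] [MeasurableSpace α] {μ : Measure α} {q δ : ℝ}
  {ξ : Set α → ℝ≥0∞} {E F G : Set α} {C : ℝ≥0∞}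

theorem Hd_empty : Hd μ q ξ δ ∅ = 0 :=
  if_pos rfl

theorem Hd_eq_iInf (hF : F.Nonempty) : Hd μ q ξ δ F =
    ⨅ (c : ℕ → α) (r : ℕ → ℝ) (_ : IsCenteredCover F δ c r),
      ∑' i, ballWeight μ q ξ (closedBall (c i) (r i)) :=
  if_neg hF.ne_empty

theorem le_Hd (hF : F.Nonempty) (h : ∀ c r, IsCenteredCover F δ c r →
      C ≤ ∑' i, ballWeight μ q ξ (closedBall (c i) (r i))) : C ≤ Hd μ q ξ δ F := by
  rw [Hd_eq_iInf hF]
  exact le_iInf fun c => le_iInf fun r => le_iInf fun hcr => h c r hcr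

theorem exists_isCenteredCover_of_Hd_lt (hF : F.Nonempty) (h : Hd μ q ξ δ F < C) :
    ∃ c r, IsCenteredCover F δ c r ∧ ∑' i, ballWeight μ q ξ (closedBall (c i) (r i)) < C := by
  contrapose! h
  exact le_Hd hF h

theorem Hd_le_tsum (hξ : ξ ∅ = 0) (hδ : 0 ≤ δ) {ι : Type*} [Countable ι] {c : ι → α} {r : ι → ℝ}
    (hc : ∀ i, c i ∈ F) (hd : ∀ i, diam (closedBall (c i) (r i)) ≤ 2 * δ)
    (hF : F ⊆ ⋃ i, closedBall (c i) (r i)) :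
    Hd μ q ξ δ F ≤ ∑' i, ballWeight μ q ξ (closedBall (c i) (r i)) := by
  rcases F.eq_empty_or_nonempty with rfl | ⟨x₀, hx₀⟩
  · exact Hd_empty.trans_le zero_le
  obtain ⟨f, hf⟩ := exists_injective_nat ι
  -- Indices outside the range of `f` receive the empty ball of radius `-1`.
  let c' : ℕ → α := Function.extend f c fun _ => x₀
  let r' : ℕ → ℝ := Function.extend f r fun _ => -1
  have hball : ∀ i, closedBall (c' (f i)) (r' (f i)) = closedBall (c i) (r i) := fun i => by
    simp only [c', r', hf.extend_apply]
  have hempty : ∀ n, (¬∃ i, f i = n) → closedBall (c' n) (r' n) = ∅ := fun n hn =>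
    closedBall_eq_empty.2 (by simp only [r', Function.extend_apply' _ _ _ hn, neg_lt_zero,
      one_pos])
  have hcover : IsCenteredCover F δ c' r' := by
    refine ⟨fun n => ?_, fun n => ?_, fun x hx => ?_⟩
    · by_cases hn : ∃ i, f i = n
      · obtain ⟨i, rfl⟩ := hn
        simpa only [c', hf.extend_apply] using hc i
      · simpa only [c', Function.extend_apply' _ _ _ hn] using hx₀
    · by_cases hn : ∃ i, f i = n
      · obtain ⟨i, rfl⟩ := hn
        exact (hball i).symm ▸ hd i
      · rw [hempty n hn, diam_empty]
        positivity
    · obtain ⟨i, hi⟩ := mem_iUnion.1 (hF hx)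
      exact mem_iUnion.2 ⟨f i, (hball i).symm ▸ hi⟩
  have hsupport : (fun n => ballWeight μ q ξ (closedBall (c' n) (r' n))).support ⊆ range f := by
    intro n hn
    by_contra hn'
    exact hn (by simp only [hempty n hn', ballWeight, hξ, mul_zero])
  calc Hd μ q ξ δ F ≤ ∑' n, ballWeight μ q ξ (closedBall (c' n) (r' n)) := by
        rw [Hd_eq_iInf ⟨x₀, hx₀⟩]
        exact iInf_le_of_le c' (iInf₂_le r' hcover)
    _ = ∑' i, ballWeight μ q ξ (closedBall (c i) (r i)) := by
        rw [← hf.tsum_eq hsupport]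
        simp only [hball]

theorem Hd_anti {δ' : ℝ} (h : δ' ≤ δ) : Hd μ q ξ δ F ≤ Hd μ q ξ δ' F := by
  rcases F.eq_empty_or_nonempty with rfl | hF
  · rw [Hd_empty, Hd_empty]
  refine le_Hd hF fun c r hcr => ?_
  rw [Hd_eq_iInf hF]
  exact iInf_le_of_le c (iInf₂_le r ⟨hcr.1, fun i => (hcr.2.1 i).trans (by gcongr), hcr.2.2⟩)

theorem Hd_iUnion_le (hξ : ξ ∅ = 0) (hδ : 0 ≤ δ) (F : ℕ → Set α) :
    Hd μ q ξ δ (⋃ n, F n) ≤ ∑' n, Hd μ q ξ δ (F n) := by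
  refine ENNReal.le_of_forall_pos_le_add fun ε hε hfin => ?_
  obtain ⟨e, he, hesum⟩ :=
    ENNReal.exists_pos_sum_of_countable (ENNReal.coe_ne_zero.2 hε.ne') {n // (F n).Nonempty}
  have hcover : ∀ n : {n // (F n).Nonempty}, ∃ c r, IsCenteredCover (F n) δ c r ∧
      ∑' i, ballWeight μ q ξ (closedBall (c i) (r i)) < Hd μ q ξ δ (F n) + e n := fun n =>
    exists_isCenteredCover_of_Hd_lt n.2 (ENNReal.lt_add_right
      (ENNReal.ne_top_of_tsum_ne_top hfin.ne n) (ENNReal.coe_ne_zero.2 (he n).ne'))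
  choose c r hcr hsum using hcover
  have hunion : ⋃ n, F n ⊆ ⋃ p : {n // (F n).Nonempty} × ℕ, closedBall (c p.1 p.2) (r p.1 p.2) := by
    refine iUnion_subset fun n x hx => ?_
    obtain ⟨i, hi⟩ := mem_iUnion.1 ((hcr ⟨n, x, hx⟩).2.2 hx)
    exact mem_iUnion.2 ⟨(⟨n, x, hx⟩, i), hi⟩
  calc Hd μ q ξ δ (⋃ n, F n)
      ≤ ∑' p : {n // (F n).Nonempty} × ℕ, ballWeight μ q ξ (closedBall (c p.1 p.2) (r p.1 p.2)) :=
        Hd_le_tsum hξ hδ (fun p => mem_iUnion.2 ⟨p.1, (hcr p.1).1 p.2⟩)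
          (fun p => (hcr p.1).2.1 p.2) hunion
    _ = ∑' (n) (i), ballWeight μ q ξ (closedBall (c n i) (r n i)) :=
        ENNReal.tsum_prod (f := fun n i => ballWeight μ q ξ (closedBall (c n i) (r n i)))
    _ ≤ ∑' n : {n // (F n).Nonempty}, (Hd μ q ξ δ (F n) + e n) :=
        ENNReal.tsum_le_tsum fun n => (hsum n).le
    _ = ∑' n : {n // (F n).Nonempty}, Hd μ q ξ δ (F n) + ∑' n, (e n : ℝ≥0∞) := ENNReal.tsum_add
    _ ≤ ∑' n, Hd μ q ξ δ (F n) + ε := add_le_add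
        (ENNReal.tsum_comp_le_tsum_of_injective Subtype.val_injective _) hesum.le

theorem Hd_le_tsum_subtype_of_lt_dist (hξ : ξ ∅ = 0) (hδ : 0 ≤ δ)
    (hsep : ∀ x ∈ F, ∀ y ∈ G, 2 * δ < dist x y) {c : ℕ → α} {r : ℕ → ℝ}
    (hcr : IsCenteredCover (F ∪ G) δ c r) :
    Hd μ q ξ δ F ≤ ∑' i : {i | c i ∈ F}, ballWeight μ q ξ (closedBall (c i) (r i)) := by
  refine Hd_le_tsum hξ hδ (fun i => i.2) (fun i => hcr.2.1 i) fun x hx => ?_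
  obtain ⟨i, hi⟩ := mem_iUnion.1 (hcr.2.2 (Or.inl hx))
  have hdist : dist x (c i) ≤ 2 * δ := (dist_center_le_diam_closedBall hi).trans (hcr.2.1 i)
  have hci : c i ∈ F := (hcr.1 i).resolve_right fun h => (hsep x hx _ h).not_ge hdist
  exact mem_iUnion.2 ⟨⟨i, hci⟩, hi⟩

theorem Hd_add_le_Hd_union (hξ : ξ ∅ = 0) (hδ : 0 ≤ δ)
    (hsep : ∀ x ∈ F, ∀ y ∈ G, 2 * δ < dist x y) :
    Hd μ q ξ δ F + Hd μ q ξ δ G ≤ Hd μ q ξ δ (F ∪ G) := by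
  rcases (F ∪ G).eq_empty_or_nonempty with hFG | hFG
  · obtain ⟨rfl, rfl⟩ := union_empty_iff.1 hFG
    simp only [Hd_empty, add_zero, zero_le]
  refine le_Hd hFG fun c r hcr => ?_
  have hdisj : Disjoint {i | c i ∈ F} {i | c i ∈ G} := Set.disjoint_left.2 fun i hF hG => by
    have := hsep _ hF _ hG
    rw [dist_self] at this
    linarith
  let w : ℕ → ℝ≥0∞ := fun i => ballWeight μ q ξ (closedBall (c i) (r i))
  calc Hd μ q ξ δ F + Hd μ q ξ δ G
      ≤ ∑' i : {i | c i ∈ F}, w i + ∑' i : {i | c i ∈ G}, w i := by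
        refine add_le_add (Hd_le_tsum_subtype_of_lt_dist hξ hδ hsep hcr)
          (Hd_le_tsum_subtype_of_lt_dist (G := F) hξ hδ (fun x hx y hy => ?_) ?_)
        · rw [dist_comm]
          exact hsep y hy x hx
        · rwa [union_comm]
    _ = ∑' i : ({i | c i ∈ F} ∪ {i | c i ∈ G} : Set ℕ), w i :=
        (ENNReal.summable.tsum_union_disjoint hdisj ENNReal.summable).symm
    _ ≤ ∑' i, w i := ENNReal.tsum_comp_le_tsum_of_injective Subtype.val_injective w

theorem H0_add_le_H0_union (hξ : ξ ∅ = 0) (hFG : AreSeparated F G) :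
    H0 μ q ξ F + H0 μ q ξ G ≤ H0 μ q ξ (F ∪ G) := by
  obtain ⟨d, hd, hsep⟩ := exists_pos_forall_lt_dist_of_areSeparated hFG
  refine ENNReal.biSup_add_biSup_le' ⟨1, one_pos⟩ ⟨1, one_pos⟩ fun δ hδ δ' hδ' => ?_
  let η := min (d / 2) (min δ δ')
  have hη : 0 < η := by positivity
  have hηd : 2 * η ≤ d := by linarith [min_le_left (d / 2) (min δ δ')]
  calc Hd μ q ξ δ F + Hd μ q ξ δ' G ≤ Hd μ q ξ η F + Hd μ q ξ η G := add_le_add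
        (Hd_anti ((min_le_right _ _).trans (min_le_left _ _)))
        (Hd_anti ((min_le_right _ _).trans (min_le_right _ _)))
    _ ≤ Hd μ q ξ η (F ∪ G) :=
        Hd_add_le_Hd_union hξ hη.le fun x hx y hy => hηd.trans_lt (hsep x hx y hy)
    _ ≤ H0 μ q ξ (F ∪ G) := le_iSup₂_of_le η hη le_rfl

theorem HM_add_le_HM_union (hξ : ξ ∅ = 0) (hFG : AreSeparated F G) :
    HM μ q ξ F + HM μ q ξ G ≤ HM μ q ξ (F ∪ G) :=
  ENNReal.biSup_add_biSup_le' ⟨∅, empty_subset F⟩ ⟨∅, empty_subset G⟩ fun s hs t ht =>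
    (H0_add_le_H0_union hξ (hFG.mono hs ht)).trans
      (le_iSup₂_of_le (s ∪ t) (union_subset_union hs ht) le_rfl)

theorem HM_le_iff : HM μ q ξ E ≤ C ↔ ∀ F ⊆ E, ∀ δ > 0, Hd μ q ξ δ F ≤ C := by
  simp only [HM, H0, iSup_le_iff, gt_iff_lt]

theorem Hd_le_HM (hδ : 0 < δ) (hFE : F ⊆ E) : Hd μ q ξ δ F ≤ HM μ q ξ E :=
  HM_le_iff.1 le_rfl F hFE δ hδ

theorem HM_mono (hFE : F ⊆ E) : HM μ q ξ F ≤ HM μ q ξ E :=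
  HM_le_iff.2 fun _ hG _ hδ => Hd_le_HM hδ (hG.trans hFE)

theorem HM_empty : HM μ q ξ ∅ = 0 :=
  nonpos_iff_eq_zero.1 <| HM_le_iff.2 fun F hF δ _ => by
    rw [subset_empty_iff.1 hF, Hd_empty]

theorem HM_singleton_le (hξ : ξ ∅ = 0) (x : α) :
    HM μ q ξ {x} ≤ ballWeight μ q ξ (closedBall x 0) := by
  refine HM_le_iff.2 fun F hF δ hδ => ?_
  rcases subset_singleton_iff_eq.1 hF with rfl | rfl
  · exact Hd_empty.trans_le zero_le
  refine (Hd_le_tsum hξ hδ.le (ι := Unit) (c := fun _ => x) (r := fun _ => 0)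
    (fun _ => mem_singleton x) (fun _ => ?_) ?_).trans_eq (tsum_fintype _ |>.trans ?_)
  · simp only [closedBall_zero, diam_singleton]
    positivity
  · simp only [closedBall_zero, iUnion_const, Subset.rfl]
  · simp only [Finset.univ_unique, Finset.sum_singleton]

theorem isSeparable_of_HM_lt_top (h : HM μ q ξ E < ∞) : IsSeparable E := by
  rcases E.eq_empty_or_nonempty with rfl | hE
  · exact countable_empty.isSeparable
  have hcover : ∀ n : ℕ, ∃ c r, IsCenteredCover E (1 / (n + 1)) c r := fun n =>
    let ⟨c, r, hcr, _⟩ := exists_isCenteredCover_of_Hd_lt hE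
      ((Hd_le_HM (by positivity : (0 : ℝ) < 1 / (n + 1)) Subset.rfl).trans_lt h)
    ⟨c, r, hcr⟩
  choose c r hcr using hcover
  refine ⟨⋃ n, range (c n), countable_iUnion fun n => countable_range _, fun x hx => ?_⟩
  refine Metric.mem_closure_iff.2 fun ε hε => ?_
  obtain ⟨n, hn⟩ := exists_nat_one_div_lt (half_pos hε)
  obtain ⟨i, hi⟩ := mem_iUnion.1 ((hcr n).2.2 hx)
  refine ⟨c n i, mem_iUnion.2 ⟨n, mem_range_self i⟩, ?_⟩
  calc dist x (c n i) ≤ 2 * (1 / (n + 1)) :=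
        (dist_center_le_diam_closedBall hi).trans ((hcr n).2.1 i)
    _ < ε := by linarith

/-- The generalized Hausdorff measure `H^{q,ξ}_μ` as an outer measure. -/
def HM.outerMeasure (μ : Measure α) (q : ℝ) (ξ : Set α → ℝ≥0∞) (hξ : ξ ∅ = 0) :
    OuterMeasure α where
  measureOf := HM μ q ξ
  empty := HM_empty
  mono := HM_mono
  iUnion_nat s _ := HM_le_iff.2 fun F hF δ hδ => by
    rw [← inter_eq_left.2 hF, inter_iUnion]
    exact (Hd_iUnion_le hξ hδ.le _).trans
      (ENNReal.tsum_le_tsum fun n => Hd_le_HM hδ inter_subset_right)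

theorem HM.isMetric_outerMeasure (hξ : ξ ∅ = 0) : (HM.outerMeasure μ q ξ hξ).IsMetric :=
  fun _ _ hst => (measure_union_le _ _).antisymm (HM_add_le_HM_union hξ hst)

variable [BorelSpace α]

/-- The generalized Hausdorff measure `H^{q,ξ}_μ` as a Borel measure; it agrees with `HM` on Borel
sets only. -/
def HM.measure (μ : Measure α) (q : ℝ) (ξ : Set α → ℝ≥0∞) (hξ : ξ ∅ = 0) : Measure α :=
  (HM.outerMeasure μ q ξ hξ).toMeasure (HM.isMetric_outerMeasure hξ).le_caratheodory

theorem HM.measure_apply (hξ : ξ ∅ = 0) (hE : MeasurableSet E) :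
    HM.measure μ q ξ hξ E = HM μ q ξ E :=
  toMeasure_apply _ _ hE

end Hausdorff

section Density

variable {α : Type*} [MetricSpace α] [MeasurableSpace α] {μ lam : Measure α} {q ρ : ℝ}
  {ξ : Set α → ℝ≥0∞} {E F : Set α}

/-- The points `x` at which `lam(B(x,r)) ≤ μ(B(x,r))^q ξ(B(x,r))` holds at all scales `r < ρ`. The
scale `r = 0` is included since covers may contain balls of radius zero. -/
def densitySet (lam μ : Measure α) (q : ℝ) (ξ : Set α → ℝ≥0∞) (ρ : ℝ) : Set α :=
  {x | ∀ r ∈ Ico 0 ρ, lam (closedBall x r) ≤ ballWeight μ q ξ (closedBall x r)}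

theorem densitySet_anti : Antitone (densitySet lam μ q ξ) :=
  fun _ _ h _ hx r hr => hx r (Ico_subset_Ico_right h hr)

theorem measure_closedBall_le_of_mem_densitySet {x : α} {r : ℝ} (hx : x ∈ densitySet lam μ q ξ ρ)
    (hr : diam (closedBall x r) < ρ) :
    lam (closedBall x r) ≤ ballWeight μ q ξ (closedBall x r) := by
  rcases lt_or_ge r 0 with hr0 | hr0
  · simp only [closedBall_eq_empty.2 hr0, measure_empty, zero_le]
  · rw [← closedBall_min_diam x r]
    exact hx _ ⟨le_min hr0 diam_nonneg, (min_le_right _ _).trans_lt hr⟩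

theorem frequently_ballWeight_lt_of_notMem_densitySet {x : α}
    (hx : ∀ n : ℕ, x ∉ densitySet lam μ q ξ (1 / (n + 1)))
    (hx0 : lam (closedBall x 0) ≤ ballWeight μ q ξ (closedBall x 0)) :
    ∃ᶠ r in nhdsWithin (0 : ℝ) (Ioi 0),
      ballWeight μ q ξ (closedBall x r) < lam (closedBall x r) := by
  intro hev
  obtain ⟨ρ, hρ : 0 < ρ, hsub⟩ := mem_nhdsGT_iff_exists_Ioo_subset.1 hev
  obtain ⟨n, hn⟩ := exists_nat_one_div_lt hρ
  refine hx n fun r hr => ?_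
  rcases hr.1.eq_or_lt with rfl | hr0
  · exact hx0
  · exact not_lt.1 (hsub ⟨hr0, hr.2.trans hn⟩)

variable [BorelSpace α]

theorem Hd_le_measure_of_isOpen [IsFiniteMeasure lam] {U : Set α} {δ : ℝ} (hξ : ξ ∅ = 0)
    (hδ : 0 < δ) (hw : IsBlanketedOn (ballWeight μ q ξ) F 4) (hF : IsSeparable F)
    (hfreq : ∀ x ∈ F, ∃ᶠ r in nhdsWithin (0 : ℝ) (Ioi 0),
      ballWeight μ q ξ (closedBall x r) ≤ lam (closedBall x r))
    (hU : IsOpen U) (hFU : F ⊆ U) : Hd μ q ξ δ F ≤ lam U := by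
  obtain ⟨M, hM⟩ := hw
  obtain ⟨u, hcount, hdisj, hu, hcover⟩ := exists_disjoint_closedBall_covering_of_frequently hF hU
    hFU (fun x hx => (hfreq x hx).and_eventually (hM.mono fun r hr => hr x hx))
    (by positivity : 0 < δ / 4)
  have : Countable u := hcount.to_subtype
  let w : u → ℝ≥0∞ := fun p => ballWeight μ q ξ (closedBall p.1.1 p.1.2)
  have hsum : ∑' p, w p ≤ lam U := calc
    ∑' p, w p ≤ ∑' p : u, lam (closedBall p.1.1 p.1.2) :=
      ENNReal.tsum_le_tsum fun p => (hu p p.2).2.2.2.1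
    _ = lam (⋃ p ∈ u, closedBall p.1 p.2) :=
      (measure_biUnion hcount hdisj fun _ _ => measurableSet_closedBall).symm
    _ ≤ lam U := measure_mono (iUnion₂_subset fun p hp => (hu p hp).2.2.1)
  refine (le_tsum_of_forall_finset (hsum.trans_lt (measure_lt_top lam U)).ne
    (fun p => (hu p p.2).2.2.2.2) fun S => ?_).trans hsum
  refine (Hd_le_tsum hξ hδ.le (c := fun p : u => p.1.1)
    (r := fun p : u => if p ∈ S then p.1.2 else 4 * p.1.2) (fun p => (hu p p.2).1) (fun p => ?_)
    (hcover S)).trans_eq (tsum_congr fun p => by split_ifs <;> rfl)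
  obtain ⟨hp0, hpδ⟩ := (hu p p.2).2.1
  split_ifs
  · exact (diam_closedBall hp0.le).trans (by linarith)
  · exact (diam_closedBall (by positivity)).trans (by linarith)

theorem HM_le_measure_of_frequently [IsFiniteMeasure lam] (hξ : ξ ∅ = 0)
    (hw : IsBlanketedOn (ballWeight μ q ξ) F 4) (hF : IsSeparable F)
    (hfreq : ∀ x ∈ F, ∃ᶠ r in nhdsWithin (0 : ℝ) (Ioi 0),
      ballWeight μ q ξ (closedBall x r) ≤ lam (closedBall x r)) :
    HM μ q ξ F ≤ lam F := by
  rw [F.measure_eq_iInf_isOpen lam]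
  refine le_iInf₂ fun U hFU => le_iInf fun hU => HM_le_iff.2 fun G hGF δ hδ => ?_
  exact Hd_le_measure_of_isOpen hξ hδ (hw.mono hGF) (hF.mono hGF) (fun x hx => hfreq x (hGF hx)) hU
    (hGF.trans hFU)

theorem HM_eq_zero_of_disjoint_densitySet [IsFiniteMeasure lam] {a : ℝ≥0} (ha : a < 1)
    (hξ : ξ ∅ = 0) (hw : IsBlanketedOn (ballWeight μ q ξ) F 4) (hfin : HM μ q ξ F < ∞)
    (hlam : ∀ s ⊆ F, MeasurableSet s → lam s = a * HM μ q ξ s) (hFm : MeasurableSet F)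
    (hF : ∀ n : ℕ, Disjoint F (densitySet lam μ q ξ (1 / (n + 1)))) : HM μ q ξ F = 0 := by
  have hcenter : ∀ x ∈ F, lam (closedBall x 0) ≤ ballWeight μ q ξ (closedBall x 0) := by
    intro x hx
    calc lam (closedBall x 0) = a * HM μ q ξ {x} := by
          rw [closedBall_zero, hlam _ (singleton_subset_iff.2 hx) (measurableSet_singleton x)]
      _ ≤ HM μ q ξ {x} := mul_le_of_le_one_left' (ENNReal.coe_le_one_iff.2 ha.le)
      _ ≤ ballWeight μ q ξ (closedBall x 0) := HM_singleton_le hξ x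
  have hle : HM μ q ξ F ≤ a * HM μ q ξ F := by
    rw [← hlam F Subset.rfl hFm]
    exact HM_le_measure_of_frequently hξ hw (isSeparable_of_HM_lt_top hfin) fun x hx =>
      (frequently_ballWeight_lt_of_notMem_densitySet
        (fun n => (Set.disjoint_left.1 (hF n)) hx) (hcenter x hx)).mono fun _ => le_of_lt
  by_contra h0
  refine hle.not_gt ?_
  calc a * HM μ q ξ F < 1 * HM μ q ξ F :=
        ENNReal.mul_lt_mul_left h0 hfin.ne (ENNReal.coe_lt_one_iff.2 ha)
    _ = HM μ q ξ F := one_mul _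

theorem exists_measure_mul_HM_le_iSup_densitySet (hξ : ξ ∅ = 0)
    (hw : IsBlanketedOn (ballWeight μ q ξ) E 4) (hE : MeasurableSet E) (hfin : HM μ q ξ E < ∞)
    {a : ℝ≥0} (ha : a < 1) :
    ∃ lam : Measure α,
      a * HM μ q ξ E ≤ ⨆ n : ℕ, lam (E ∩ densitySet lam μ q ξ (1 / (n + 1))) := by
  have : IsFiniteMeasure ((HM.measure μ q ξ hξ).restrict E) := ⟨by
    rwa [Measure.restrict_apply_univ, HM.measure_apply hξ hE]⟩
  let lam := a • (HM.measure μ q ξ hξ).restrict E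
  have hlam : ∀ s ⊆ E, MeasurableSet s → lam s = a * HM μ q ξ s := fun s hsE hs => by
    rw [Measure.smul_apply, Measure.restrict_eq_self _ hsE, HM.measure_apply hξ hs]
    rfl
  let D : ℕ → Set α := fun n => E ∩ densitySet lam μ q ξ (1 / (n + 1))
  have hD : Monotone D := fun _ _ hmn =>
    inter_subset_inter_right E (densitySet_anti (Nat.one_div_le_one_div hmn))
  -- The density sets need not be measurable, so the exceptional set avoids a measurable hull.
  let N := E \ toMeasurable lam (⋃ n, D n)
  have hNE : N ⊆ E := sdiff_subset
  have hNm : MeasurableSet N := hE.diff (measurableSet_toMeasurable _ _)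
  have hND : ∀ n : ℕ, Disjoint N (densitySet lam μ q ξ (1 / (n + 1))) := fun n =>
    Set.disjoint_left.2 fun x hx hxD =>
      hx.2 (subset_toMeasurable _ _ (mem_iUnion.2 ⟨n, hx.1, hxD⟩))
  have hN : lam N = 0 := by
    rw [hlam N hNE hNm, HM_eq_zero_of_disjoint_densitySet ha hξ (hw.mono hNE)
      ((HM_mono hNE).trans_lt hfin) (fun s hs => hlam s (hs.trans hNE)) hNm hND, mul_zero]
  refine ⟨lam, ?_⟩
  calc a * HM μ q ξ E = lam E := (hlam E Subset.rfl hE).symm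
    _ ≤ lam (toMeasurable lam (⋃ n, D n) ∪ N) :=
        measure_mono (subset_union_right.trans_eq union_sdiff_self.symm)
    _ ≤ lam (toMeasurable lam (⋃ n, D n)) + lam N := measure_union_le _ _
    _ = ⨆ n, lam (D n) := by rw [hN, add_zero, measure_toMeasurable, hD.measure_iUnion]

end Density

section Product

variable {α β : Type*} [MetricSpace α] [MetricSpace β] [MeasurableSpace β] {ν : Measure β}
  {q ρ δ : ℝ} {ξ : Set α → ℝ≥0∞} {ξ' : Set β → ℝ≥0∞} {F : Set α} {F' : Set β}

theorem IsCenteredCover.Hd_le_tsum_indicator {c : ℕ → α × β} {r : ℕ → ℝ} (hξ' : ξ' ∅ = 0)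
    (hδ : 0 ≤ δ) (hcr : IsCenteredCover (F ×ˢ F') δ c r) {x : α} (hx : x ∈ F) :
    Hd ν q ξ' δ F' ≤ ∑' i, (closedBall (c i).1 (r i)).indicator
      (fun _ => ballWeight ν q ξ' (closedBall (c i).2 (r i))) x := by
  let I : Set ℕ := {i | x ∈ closedBall (c i).1 (r i)}
  have hcover : F' ⊆ ⋃ i : I, closedBall (c i).2 (r i) := fun y hy => by
    obtain ⟨i, hi⟩ := mem_iUnion.1 (hcr.2.2 (mk_mem_prod hx hy))
    rw [← closedBall_prod_same] at hi
    exact mem_iUnion.2 ⟨⟨i, hi.1⟩, hi.2⟩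
  calc Hd ν q ξ' δ F' ≤ ∑' i : I, ballWeight ν q ξ' (closedBall (c i).2 (r i)) :=
        Hd_le_tsum hξ' hδ (fun i => (hcr.1 i).2)
          (fun i => (diam_closedBall_snd_le _ _).trans (hcr.2.1 i)) hcover
    _ = ∑' i, I.indicator (fun i => ballWeight ν q ξ' (closedBall (c i).2 (r i))) i :=
        tsum_subtype I fun i => ballWeight ν q ξ' (closedBall (c i).2 (r i))
    _ = _ := rfl

variable [MeasurableSpace α] {μ lam : Measure α}

theorem ballWeight_mul_ballWeight_le_prod [SFinite ν] (p : α × β) (r : ℝ) :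
    ballWeight μ q ξ (closedBall p.1 r) * ballWeight ν q ξ' (closedBall p.2 r) ≤
      ballWeight (μ.prod ν) q (prodPre ξ ξ') (closedBall p r) := by
  simp only [ballWeight, prodPre, fst_image_closedBall, snd_image_closedBall]
  rw [mul_mul_mul_comm, ← closedBall_prod_same, Measure.prod_prod]
  gcongr
  exact epow_mul_epow_le _ _ _

theorem measure_mul_Hd_le_Hd_prod [BorelSpace α] [SFinite ν] (hξ' : ξ' ∅ = 0) (hδ : 0 ≤ δ)
    (hδρ : 2 * δ < ρ) (hF : F ⊆ densitySet lam μ q ξ ρ) :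
    lam F * Hd ν q ξ' δ F' ≤ Hd (μ.prod ν) q (prodPre ξ ξ') δ (F ×ˢ F') := by
  rcases F.eq_empty_or_nonempty with rfl | hFne
  · simp only [measure_empty, zero_mul, zero_le]
  rcases F'.eq_empty_or_nonempty with rfl | hFne'
  · simp only [Hd_empty, mul_zero, zero_le]
  refine le_Hd (hFne.prod hFne') fun c r hcr => ?_
  refine (measure_mul_le_tsum_mul_measure lam (fun _ => measurableSet_closedBall)
    fun x hx => hcr.Hd_le_tsum_indicator hξ' hδ hx).trans (ENNReal.tsum_le_tsum fun i => ?_)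
  have hdiam : diam (closedBall (c i).1 (r i)) < ρ :=
    ((diam_closedBall_fst_le _ _).trans (hcr.2.1 i)).trans_lt hδρ
  rw [mul_comm]
  exact (mul_le_mul_left (measure_closedBall_le_of_mem_densitySet (hF (hcr.1 i).1) hdiam) _).trans
    (ballWeight_mul_ballWeight_le_prod _ _)

theorem measure_mul_HM_le_HM_prod [BorelSpace α] [SFinite ν] (hξ' : ξ' ∅ = 0) (hρ : 0 < ρ)
    (hF : F ⊆ densitySet lam μ q ξ ρ) :
    lam F * HM ν q ξ' F' ≤ HM (μ.prod ν) q (prodPre ξ ξ') (F ×ˢ F') := by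
  simp only [HM, H0, ENNReal.mul_iSup]
  refine iSup₂_le fun G hG => iSup₂_le fun δ hδ => ?_
  let η := min δ (ρ / 4)
  have hη : 0 < η := by positivity
  have hηρ : 2 * η < ρ := by linarith [min_le_right δ (ρ / 4)]
  calc lam F * Hd ν q ξ' δ G ≤ lam F * Hd ν q ξ' η G := by gcongr; exact Hd_anti (min_le_left _ _)
    _ ≤ Hd (μ.prod ν) q (prodPre ξ ξ') η (F ×ˢ G) := measure_mul_Hd_le_Hd_prod hξ' hη.le hηρ hF
    _ ≤ HM (μ.prod ν) q (prodPre ξ ξ') (F ×ˢ F') := Hd_le_HM hη (prod_mono Subset.rfl hG)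

theorem stmt19_general [BorelSpace α] [SFinite ν] (hμ : MeasureBlanketed μ)
    (hξ : ξ ∅ = 0) (hξD : PremeasureBlanketed ξ) (hξ' : ξ' ∅ = 0) {E : Set α}
    (hEm : MeasurableSet E) (hE : E ⊆ measSupport μ) (hfin : HM μ q ξ E < ∞) (E' : Set β) :
    HM μ q ξ E * HM ν q ξ' E' ≤ HM (μ.prod ν) q (prodPre ξ ξ') (E ×ˢ E') := by
  have hw : IsBlanketedOn (ballWeight μ q ξ) E 4 :=
    (by norm_num : (2 : ℝ) ^ 2 = 4) ▸ (isBlanketedOn_ballWeight hμ hξD q 2).mono hE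
  refine ENNReal.le_of_forall_lt_one_mul_le fun a ha => ?_
  lift a to ℝ≥0 using ha.ne_top
  obtain ⟨lam, hlam⟩ :=
    exists_measure_mul_HM_le_iSup_densitySet hξ hw hEm hfin (ENNReal.coe_lt_one_iff.1 ha)
  calc a * (HM μ q ξ E * HM ν q ξ' E') = a * HM μ q ξ E * HM ν q ξ' E' := (mul_assoc _ _ _).symm
    _ ≤ (⨆ n : ℕ, lam (E ∩ densitySet lam μ q ξ (1 / (n + 1)))) * HM ν q ξ' E' := by gcongr
    _ = ⨆ n : ℕ, lam (E ∩ densitySet lam μ q ξ (1 / (n + 1))) * HM ν q ξ' E' :=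
        ENNReal.iSup_mul _ _
    _ ≤ HM (μ.prod ν) q (prodPre ξ ξ') (E ×ˢ E') := iSup_le fun n =>
        (measure_mul_HM_le_HM_prod hξ' Nat.one_div_pos_of_nat inter_subset_right).trans
          (HM_mono (prod_mono inter_subset_left Subset.rfl))

end Product

theorem stmt19 (q : ℝ) (μ : Measure X) [IsProbabilityMeasure μ] (hμ : MeasureBlanketed μ)
    (ν : Measure X') [IsProbabilityMeasure ν] (hν : MeasureBlanketed ν)
    (ξ : Set X → ℝ≥0∞) (ξ' : Set X' → ℝ≥0∞)
    (hξ : IsPremeasure ξ) (hξD : PremeasureBlanketed ξ)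
    (hξ' : IsPremeasure ξ') (hξD' : PremeasureBlanketed ξ')
    (E : Set X) (E' : Set X') (hEm : MeasurableSet E) (hE'm : MeasurableSet E')
    (hE : E ⊆ measSupport μ) (hE' : E' ⊆ measSupport ν)
    (hfin : HM μ q ξ E < ∞) (hfin' : HM ν q ξ' E' < ∞) :
    HM μ q ξ E * HM ν q ξ' E' ≤ HM (μ.prod ν) q (prodPre ξ ξ') (E ×ˢ E') :=
  stmt19_general hμ hξ.1 hξD hξ'.1 hEm hE hfin E'

end Thms
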